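/- In a finite simple graph where every vertex has degree at most d, the number of connected induced subgraphs of size k containing a fixed vertex v is at most (d·k)^{k-1} (in particular, it is bounded by a function of d and k only, independent of the total number of vertices). -/

import Mathlib

namespace SimpleGraph

theorem exists_adj_of_connected_induce {V : Type*} {G : SimpleGraph V} {S T : Finset V}
    (hS : (G.induce (S : Set V)).Connected) (hTS : T ⊂ S) (hT : T.Nonempty) :
    ∃ x ∈ T, ∃ y ∈ S, y ∉ T ∧ G.Adj x y := by
  obtain ⟨a, ha⟩ := hT
  obtain ⟨b, hbS, hbT⟩ := Finset.exists_of_ssubset hTS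
  obtain ⟨p⟩ := hS.preconnected ⟨a, hTS.subset ha⟩ ⟨b, hbS⟩
  obtain ⟨e, -, hfst, hsnd⟩ := p.exists_boundary_dart {x | (x : V) ∈ T} ha hbT
  exact ⟨_, hfst, _, e.snd.2, hsnd, e.adj⟩

variable {V : Type*} [Fintype V] [DecidableEq V] (G : SimpleGraph V) [DecidableRel G.Adj]

/-- The vertex sets obtained from `{v}` by `n` times inserting a neighbour of a vertex already
present. -/
def grownSets (v : V) : ℕ → Finset (Finset V)
  | 0 => {{v}}
  | n + 1 => (grownSets v n).biUnion fun T =>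
      (T.biUnion fun x => G.neighborFinset x).image fun u => insert u T

variable {G}

theorem card_le_of_mem_grownSets {v : V} {n : ℕ} {T : Finset V} (hT : T ∈ G.grownSets v n) :
    T.card ≤ n + 1 := by
  induction n generalizing T with
  | zero => simp_all [grownSets]
  | succ n ih =>
    simp only [grownSets, Finset.mem_biUnion, Finset.mem_image] at hT
    obtain ⟨T', hT', u, -, rfl⟩ := hT
    exact (Finset.card_insert_le u T').trans (Nat.succ_le_succ (ih hT'))

theorem card_grownSets_le {d : ℕ} (hdeg : ∀ v, G.degree v ≤ d) (v : V) {n k : ℕ} (hn : n < k) :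
    (G.grownSets v n).card ≤ (d * k) ^ n := by
  induction n with
  | zero => simp [grownSets]
  | succ n ih =>
    refine (Finset.card_biUnion_le_card_mul _ _ (d * k) fun T hT => ?_).trans ?_
    · refine Finset.card_image_le.trans
        ((Finset.card_biUnion_le_card_mul _ _ d fun u _ => ?_).trans ?_)
      · simpa using hdeg u
      · rw [mul_comm]
        exact Nat.mul_le_mul_left d ((card_le_of_mem_grownSets hT).trans hn.le)
    · rw [pow_succ]
      exact Nat.mul_le_mul_right _ (ih (by omega))

theorem exists_subset_mem_grownSets {v : V} {S : Finset V} (hv : v ∈ S)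
    (hS : (G.induce (S : Set V)).Connected) {n : ℕ} (hn : n < S.card) :
    ∃ T ∈ G.grownSets v n, T ⊆ S ∧ T.card = n + 1 := by
  induction n with
  | zero => exact ⟨{v}, by simp [grownSets], by simpa using hv, by simp⟩
  | succ n ih =>
    obtain ⟨T, hT, hTS, hcard⟩ := ih (by omega)
    have hss : T ⊂ S := hTS.ssubset_of_ne (by rintro rfl; omega)
    obtain ⟨x, hx, y, hyS, hyT, hxy⟩ :=
      exists_adj_of_connected_induce hS hss (Finset.card_pos.mp (by omega))
    refine ⟨insert y T, ?_, Finset.insert_subset hyS hTS, by simp [hyT, hcard]⟩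
    simp only [grownSets, Finset.mem_biUnion, Finset.mem_image]
    exact ⟨T, hT, y, ⟨x, hx, by simpa using hxy⟩, rfl⟩

end SimpleGraph

/-- In a graph of maximum degree at most `d`, the number of connected induced subgraphs of
size `k` containing a fixed vertex `v` is at most `(d*k)^(k-1)`. -/
theorem stmt10 {V : Type*} [Fintype V] [DecidableEq V] (G : SimpleGraph V)
    [DecidableRel G.Adj] (d : ℕ) (hdeg : ∀ v, G.degree v ≤ d) (k : ℕ) (v : V) :
    {S : Finset V | v ∈ S ∧ S.card = k ∧ (G.induce (↑S : Set V)).Connected}.ncard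
      ≤ (d * k) ^ (k - 1) := by
  rcases Nat.eq_zero_or_pos k with rfl | hk
  · have hempty : {S : Finset V | v ∈ S ∧ S.card = 0 ∧
        (G.induce (↑S : Set V)).Connected} = ∅ := by
      ext S
      simp only [Set.mem_ofPred_eq, Set.mem_empty_iff_false, iff_false]
      rintro ⟨hv, hcard, -⟩
      exact (Finset.card_pos.mpr ⟨v, hv⟩).ne' hcard
    rw [hempty, Set.ncard_empty]
    exact Nat.zero_le _
  · have hsub : {S : Finset V | v ∈ S ∧ S.card = k ∧ (G.induce (↑S : Set V)).Connected} ⊆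
        (G.grownSets v (k - 1) : Set (Finset V)) := by
      rintro S ⟨hv, hcard, hS⟩
      obtain ⟨T, hT, hTS, hTcard⟩ :=
        SimpleGraph.exists_subset_mem_grownSets hv hS (n := k - 1) (by omega)
      rwa [Finset.eq_of_subset_of_card_le hTS (by omega)] at hT
    refine (Set.ncard_le_ncard hsub (Finset.finite_toSet _)).trans ?_
    rw [Set.ncard_coe_finset]
    exact SimpleGraph.card_grownSets_le hdeg v (by omega)
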